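/- Let H be a real Hilbert space, N ≥ 2, A₁ : H ⇉ H maximally monotone, and δ, γ > 0. Define Q̃_{δ←γ} : H^{N−1} → H^{N−1} componentwise for x = (x¹,…,x^{N−1}) by Q̃¹_{δ←γ}x = (δ/γ)x¹ + (1 − δ/γ)J_{γA₁}x¹ and Q̃ⁱ_{δ←γ}x = (δ/γ)(xⁱ − x¹) + Q̃¹_{δ←γ}x for i = 2,…,N−1. Then Q̃_{δ←γ} is Lipschitz continuous with constant √(δ/γ) + √(|γ − δ|/γ) · max{√(N−1), √(2N)·√(δ/γ)}; that is, ‖Q̃_{δ←γ}x − Q̃_{δ←γ}w‖ ≤ (√(δ/γ) + √(|γ − δ|/γ)·max{√(N−1), √(2N)·√(δ/γ)})·‖x − w‖ for all x, w ∈ H^{N−1}. -/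

import Mathlib

open scoped Pointwise RealInnerProductSpace

variable {H : Type*}

/-- A set-valued operator is monotone. -/
def SVMonotone [NormedAddCommGroup H] [InnerProductSpace ℝ H] (A : H → Set H) : Prop :=
  ∀ ⦃x y u v : H⦄, u ∈ A x → v ∈ A y → 0 ≤ ⟪x - y, u - v⟫

/-- The graph of a set-valued operator. -/
def SVGraph (A : H → Set H) : Set (H × H) := {p | p.2 ∈ A p.1}

/-- A set-valued operator is maximally monotone. -/
def MaxMonotone [NormedAddCommGroup H] [InnerProductSpace ℝ H] (A : H → Set H) : Prop :=
  SVMonotone A ∧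
    ∀ B : H → Set H, SVMonotone B → SVGraph A ⊆ SVGraph B → SVGraph B = SVGraph A

/-- The set of fixed points of a single-valued operator. -/
def FixSet {E : Type*} (T : E → E) : Set E := {x | T x = x}

/-- `J` is the resolvent `(Id + γA)⁻¹` of the set-valued operator `A`, i.e.
`J x` is a point with `x - J x ∈ γ • A (J x)` for every `x`. -/
def IsResolventOf [NormedAddCommGroup H] [InnerProductSpace ℝ H]
    (A : H → Set H) (γ : ℝ) (J : H → H) : Prop :=
  ∀ x : H, x - J x ∈ γ • A (J x)

/-- The vector `(x¹, …, x^{N−1}) ∈ H^{N−1}` read as a function on the indices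
`1, …, N−1` (so `MTvec N v i = xⁱ`). -/
def MTvec [NormedAddCommGroup H] (N : ℕ) (v : Fin (N - 1) → H) : ℕ → H :=
  fun i => if h : i - 1 < N - 1 then v ⟨i - 1, h⟩ else 0

/-!
With `t = δ / γ` and `M = N - 1`, the relocator is `x ↦ t x + (1 - t) (J x¹, …, J x¹)`. The
resolvent `J` is nonexpansive and the diagonal embedding `H → H^M` scales norms by `√M`, so
`t + |1 - t| √M` is a Lipschitz constant. It is at most the claimed one: for `t ≤ 1` because
`s ≤ √s` on `[0, 1]`, and for `t ≥ 1` because `t ≤ √t + (t - 1)`, `t - 1 ≤ √(t - 1) √t` and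
`1 + √M ≤ √(2 (M + 1))`.
-/

namespace IsResolventOf

variable [NormedAddCommGroup H] [InnerProductSpace ℝ H] {A : H → Set H} {γ : ℝ} {J : H → H}

lemma norm_sub_sq_le_inner (hJ : IsResolventOf A γ J) (hA : SVMonotone A) (hγ : 0 ≤ γ) (x y : H) :
    ‖J x - J y‖ ^ 2 ≤ ⟪J x - J y, x - y⟫ := by
  obtain ⟨u, hu, hux⟩ := Set.mem_smul_set.mp (hJ x)
  obtain ⟨v, hv, hvy⟩ := Set.mem_smul_set.mp (hJ y)
  have hxy : x - y = (J x - J y) + γ • (u - v) := by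
    rw [smul_sub, hux, hvy]
    abel
  calc ‖J x - J y‖ ^ 2
      ≤ ‖J x - J y‖ ^ 2 + γ * ⟪J x - J y, u - v⟫ :=
        le_add_of_nonneg_right (mul_nonneg hγ (hA hu hv))
    _ = ⟪J x - J y, x - y⟫ := by
        rw [hxy, inner_add_right, real_inner_self_eq_norm_sq, real_inner_smul_right]

lemma lipschitzWith_one (hJ : IsResolventOf A γ J) (hA : SVMonotone A) (hγ : 0 ≤ γ) :
    LipschitzWith 1 J := by
  refine LipschitzWith.of_dist_le_mul fun x y => ?_
  rw [NNReal.coe_one, one_mul, dist_eq_norm, dist_eq_norm]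
  have hsq : ‖J x - J y‖ ^ 2 ≤ ‖J x - J y‖ * ‖x - y‖ :=
    (hJ.norm_sub_sq_le_inner hA hγ x y).trans (real_inner_le_norm _ _)
  nlinarith [norm_nonneg (J x - J y), norm_nonneg (x - y)]

end IsResolventOf

lemma lipschitzWith_toLp_const {ι E : Type*} [Fintype ι] [PseudoEMetricSpace E]
    (p : ENNReal) [Fact (1 ≤ p)] :
    LipschitzWith ((Fintype.card ι : NNReal) ^ (1 / p).toReal)
      fun a : E => WithLp.toLp p (Function.const ι a) := by
  have hconst : LipschitzWith 1 (Function.const ι : E → ι → E) :=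
    LipschitzWith.of_edist_le fun a b => edist_pi_const_le a b
  simpa only [mul_one, Function.comp_def] using
    (PiLp.lipschitzWith_toLp p fun _ : ι => E).comp hconst

/-- The relocator `x ↦ t x + (1 - t) (T xⁱ, …, T xⁱ)` on the `ℓᵖ` power `E^ι`, built from a map
`T : E → E` and a distinguished index `i`. The operator `Q̃_{δ←γ}` is the case `p = 2`,
`t = δ / γ`, `T = J_{γA₁}`, with `i` the first index. -/
def relocator {ι E : Type*} [AddCommGroup E] [Module ℝ E] (p : ENNReal) (t : ℝ) (T : E → E) (i : ι)
    (x : PiLp p fun _ : ι => E) : PiLp p fun _ : ι => E :=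
  t • x + (1 - t) • WithLp.toLp p (Function.const ι (T (x i)))

section Relocator

variable {ι E : Type*} [Fintype ι] [SeminormedAddCommGroup E] [NormedSpace ℝ E]

lemma lipschitzWith_relocator (p : ENNReal) [Fact (1 ≤ p)] (t : ℝ) {T : E → E} {K : NNReal}
    (hT : LipschitzWith K T) (i : ι) :
    LipschitzWith (‖t‖₊ + ‖1 - t‖₊ * ((Fintype.card ι : NNReal) ^ (1 / p).toReal * K))
      (relocator p t T i) := by
  have happly : LipschitzWith 1 fun x : PiLp p fun _ : ι => E => x i :=
    LipschitzWith.of_edist_le fun x y => PiLp.edist_apply_le x y i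
  have hTi : LipschitzWith K fun x : PiLp p fun _ : ι => E => T (x i) := by
    simpa only [mul_one, Function.comp_def] using hT.comp happly
  exact (lipschitzWith_smul t).add
    ((lipschitzWith_smul (1 - t)).comp ((lipschitzWith_toLp_const p).comp hTi))

lemma norm_relocator_sub_relocator_le {t : ℝ} (ht : 0 ≤ t) {T : E → E} (hT : LipschitzWith 1 T)
    (i : ι) (x y : PiLp 2 fun _ : ι => E) :
    ‖relocator 2 t T i x - relocator 2 t T i y‖ ≤
      (t + |1 - t| * √(Fintype.card ι)) * ‖x - y‖ := by
  simpa [Real.sqrt_eq_rpow, abs_of_nonneg ht] using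
    (lipschitzWith_relocator 2 t hT i).norm_sub_le x y

end Relocator

lemma sqrt_add_sqrt_le_sqrt_two_mul_add {a b : ℝ} (ha : 0 ≤ a) (hb : 0 ≤ b) :
    √a + √b ≤ √(2 * (a + b)) := by
  apply Real.le_sqrt_of_sq_le
  simpa only [Real.sq_sqrt ha, Real.sq_sqrt hb] using add_sq_le (a := √a) (b := √b)

lemma add_abs_one_sub_mul_sqrt_le_of_le_one {t : ℝ} (ht : 0 ≤ t) (ht1 : t ≤ 1) (M : ℝ) :
    t + |1 - t| * √M ≤ √t + √|1 - t| * √M := by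
  have habs : |1 - t| ≤ 1 := abs_le.mpr ⟨by linarith, by linarith⟩
  gcongr
  · exact Real.le_sqrt_self_iff.mpr ht1
  · exact Real.le_sqrt_self_iff.mpr habs

lemma add_abs_one_sub_mul_sqrt_le_of_one_le {t M : ℝ} (ht : 1 ≤ t) (hM : 0 ≤ M) :
    t + |1 - t| * √M ≤ √t + √|1 - t| * (√(2 * (M + 1)) * √t) := by
  have habs : |1 - t| = t - 1 := by rw [abs_sub_comm, abs_of_nonneg (sub_nonneg.mpr ht)]
  have hsqrt_t : 1 ≤ √t := Real.one_le_sqrt.mpr ht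
  have hsqrt_M : √M + 1 ≤ √(2 * (M + 1)) := by
    simpa only [Real.sqrt_one] using sqrt_add_sqrt_le_sqrt_two_mul_add hM zero_le_one
  have hsub : t - 1 ≤ √(t - 1) * √t := by
    calc t - 1 = √(t - 1) * √(t - 1) := (Real.mul_self_sqrt (sub_nonneg.mpr ht)).symm
      _ ≤ √(t - 1) * √t := by gcongr; linarith
  rw [habs]
  calc t + (t - 1) * √M = 1 + (t - 1) * (√M + 1) := by ring
    _ ≤ √t + (√(t - 1) * √t) * √(2 * (M + 1)) := by gcongr
    _ = √t + √(t - 1) * (√(2 * (M + 1)) * √t) := by ring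

lemma add_abs_one_sub_mul_sqrt_le_max {t M : ℝ} (ht : 0 ≤ t) (hM : 0 ≤ M) :
    t + |1 - t| * √M ≤ √t + √|1 - t| * max (√M) (√(2 * (M + 1)) * √t) := by
  rcases le_total t 1 with ht1 | ht1
  · refine (add_abs_one_sub_mul_sqrt_le_of_le_one ht ht1 M).trans ?_
    gcongr
    exact le_max_left _ _
  · refine (add_abs_one_sub_mul_sqrt_le_of_one_le ht1 hM).trans ?_
    gcongr
    exact le_max_right _ _

lemma MTvec_one [NormedAddCommGroup H] {N : ℕ} (hN : 0 < N - 1) (v : Fin (N - 1) → H) :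
    MTvec N v 1 = v ⟨0, hN⟩ :=
  dif_pos hN

theorem stmt17_general [NormedAddCommGroup H] [NormedSpace ℝ H]
    (N : ℕ) (hN : 2 ≤ N) (δ γ : ℝ) (hδ : 0 ≤ δ) (hγ : 0 < γ)
    (J : H → H) (hJ : LipschitzWith 1 J)
    (Q : (PiLp 2 fun _ : Fin (N - 1) => H) → (PiLp 2 fun _ : Fin (N - 1) => H))
    (hQ : ∀ v (k : Fin (N - 1)),
      Q v k = (δ / γ) • (v k - MTvec N v 1) +
        ((δ / γ) • MTvec N v 1 + (1 - δ / γ) • J (MTvec N v 1)))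
    (v w : PiLp 2 fun _ : Fin (N - 1) => H) :
    ‖Q v - Q w‖ ≤
      (√(δ / γ) + √(|γ - δ| / γ) * max √((N : ℝ) - 1) (√(2 * (N : ℝ)) * √(δ / γ))) *
        ‖v - w‖ := by
  have hpos : 0 < N - 1 := by omega
  have hQ_eq : Q = relocator 2 (δ / γ) J ⟨0, hpos⟩ := by
    ext v k
    simp only [hQ, MTvec_one hpos, relocator, PiLp.add_apply, PiLp.smul_apply, Function.const_apply]
    module
  have hcard : (Fintype.card (Fin (N - 1)) : ℝ) = N - 1 := by
    rw [Fintype.card_fin, Nat.cast_pred (by omega)]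
  have habs : |γ - δ| / γ = |1 - δ / γ| := by
    rw [one_sub_div hγ.ne', abs_div, abs_of_pos hγ]
  have ht : 0 ≤ δ / γ := div_nonneg hδ hγ.le
  have hM : (0 : ℝ) ≤ N - 1 := hcard ▸ Nat.cast_nonneg _
  have hconst := add_abs_one_sub_mul_sqrt_le_max ht hM
  rw [sub_add_cancel] at hconst
  calc ‖Q v - Q w‖ ≤ (δ / γ + |1 - δ / γ| * √((N : ℝ) - 1)) * ‖v - w‖ := by
        simpa only [hQ_eq, hcard] using norm_relocator_sub_relocator_le ht hJ ⟨0, hpos⟩ v w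
    _ ≤ _ := by
        rw [habs]
        gcongr

/-- the Malitsky–Tam fixed-point relocator `Q̃_{δ←γ}` is Lipschitz
continuous with constant `√(δ/γ) + √(|γ−δ|/γ)·max{√(N−1), √(2N)·√(δ/γ)}`. -/
theorem stmt17 [NormedAddCommGroup H] [InnerProductSpace ℝ H] [CompleteSpace H]
    (N : ℕ) (hN : 2 ≤ N)
    (A₁ : H → Set H) (hA₁ : MaxMonotone A₁)
    (δ γ : ℝ) (hδ : 0 < δ) (hγ : 0 < γ)
    (J₁ : H → H) (hJ₁ : IsResolventOf A₁ γ J₁)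
    (Q : (PiLp 2 fun _ : Fin (N - 1) => H) → (PiLp 2 fun _ : Fin (N - 1) => H))
    (hQ : ∀ v (k : Fin (N - 1)),
      Q v k = (δ / γ) • (v k - MTvec N v 1) +
        ((δ / γ) • MTvec N v 1 + (1 - δ / γ) • J₁ (MTvec N v 1))) :
    ∀ v w : PiLp 2 fun _ : Fin (N - 1) => H,
      ‖Q v - Q w‖ ≤
        (Real.sqrt (δ / γ) + Real.sqrt (|γ - δ| / γ) *
          max (Real.sqrt ((N : ℝ) - 1)) (Real.sqrt (2 * (N : ℝ)) * Real.sqrt (δ / γ))) *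
        ‖v - w‖ := by
  exact stmt17_general N hN δ γ hδ.le hγ J₁ (hJ₁.lipschitzWith_one hA₁.1 hγ.le) Q hQ
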